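/- For every γ ∈ (1,2), every N ≥ 1, and every nonzero y ∈ ℝ^N, one has yᵀ Â_γ y < yᵀ A_γ y < (4/3)·yᵀ Â_γ y; consequently every eigenvalue of Â_γ^{−1} A_γ lies strictly between 1 and 4/3. -/

import Mathlib

open Matrix

/-- The fourth-order coefficients `s_k^{(γ)}`. -/
noncomputable def sCoef (γ : ℝ) (k : ℤ) : ℝ :=
  ((-1 : ℝ) ^ k * Real.Gamma (γ + 1) /
      (Real.Gamma (γ / 2 - k + 1) * Real.Gamma (γ / 2 + k + 1))) *
    (1 + γ * (γ + 1) * (γ + 2) / (6 * (γ - 2 * k + 2) * (γ + 2 * k + 2)))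

/-- The second-order coefficients `g_k^{(γ)}`. -/
noncomputable def gCoef (γ : ℝ) (k : ℤ) : ℝ :=
  (-1 : ℝ) ^ k * Real.Gamma (γ + 1) /
    (Real.Gamma (γ / 2 - k + 1) * Real.Gamma (γ / 2 + k + 1))

/-- `A_γ`: symmetric Toeplitz matrix with `(i,j)` entry `s_{i-j}^{(γ)}`. -/
noncomputable def Amat (γ : ℝ) (N : ℕ) : Matrix (Fin N) (Fin N) ℝ :=
  fun i j => sCoef γ ((i : ℤ) - (j : ℤ))

/-- `Â_γ`: symmetric Toeplitz matrix with `(i,j)` entry `g_{i-j}^{(γ)}`. -/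
noncomputable def Ahat (γ : ℝ) (N : ℕ) : Matrix (Fin N) (Fin N) ℝ :=
  fun i j => gCoef γ ((i : ℤ) - (j : ℤ))


lemma half_ne_int {γ : ℝ} (h1 : 1 < γ) (h2 : γ < 2) (m : ℤ) : γ / 2 - m ≠ 0 := by
  intro h
  have h3 : γ = 2 * (m : ℝ) := by linarith
  have h4 : (0 : ℝ) < m := by linarith
  have h5 : (m : ℝ) < 1 := by linarith
  have h6 : 0 < m := by exact_mod_cast h4
  have h7 : m < 1 := by exact_mod_cast h5
  omega

lemma gCoef_succ {γ : ℝ} (h1 : 1 < γ) (h2 : γ < 2) (k : ℤ) :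
    gCoef γ (k + 1) = - gCoef γ k * ((γ / 2 - k) / (γ / 2 + k + 1)) := by
  have e1 : γ / 2 - k ≠ 0 := half_ne_int h1 h2 k
  have e2 : γ / 2 + k + 1 ≠ 0 := by
    have := half_ne_int h1 h2 (-k - 1)
    push_cast at this
    intro h; apply this; linarith
  have G1 : Real.Gamma (γ / 2 - k + 1) = (γ / 2 - k) * Real.Gamma (γ / 2 - k) :=
    Real.Gamma_add_one e1
  have G2 : Real.Gamma (γ / 2 + k + 1 + 1) = (γ / 2 + k + 1) * Real.Gamma (γ / 2 + k + 1) :=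
    Real.Gamma_add_one e2
  have n1 : Real.Gamma (γ / 2 - k) ≠ 0 := by
    apply Real.Gamma_ne_zero
    intro m h
    have := half_ne_int h1 h2 (k - m)
    push_cast at this
    apply this; linarith
  have n2 : Real.Gamma (γ / 2 + k + 1) ≠ 0 := by
    apply Real.Gamma_ne_zero
    intro m h
    have := half_ne_int h1 h2 (-k - 1 - m)
    push_cast at this
    apply this; linarith
  unfold gCoef
  have a1 : γ / 2 - ((k + 1 : ℤ) : ℝ) + 1 = γ / 2 - k := by push_cast; ring
  have a2 : γ / 2 + ((k + 1 : ℤ) : ℝ) + 1 = γ / 2 + k + 1 + 1 := by push_cast; ring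
  rw [a1, a2, G1, G2, zpow_add_one₀ (by norm_num)]
  generalize Real.Gamma (γ / 2 - k) = x at *
  generalize Real.Gamma (γ / 2 + k + 1) = y at *
  generalize γ / 2 - k = p at *
  generalize γ / 2 + k + 1 = q at *
  field_simp

lemma gCoef_neg (γ : ℝ) (k : ℤ) : gCoef γ (-k) = gCoef γ k := by
  unfold gCoef
  have : (-1 : ℝ) ^ (-k) = (-1 : ℝ) ^ k := by
    rw [_root_.zpow_neg, ← _root_.inv_zpow]; norm_num
  rw [this]
  push_cast
  rw [sub_neg_eq_add, ← sub_eq_add_neg, mul_comm (Real.Gamma (γ / 2 + k + 1))]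

lemma sCoef_eq {γ : ℝ} (h1 : 1 < γ) (h2 : γ < 2) (k : ℤ) :
    sCoef γ k = gCoef γ k + γ / 24 * (2 * gCoef γ k - gCoef γ (k - 1) - gCoef γ (k + 1)) := by
  have s1 := gCoef_succ h1 h2 k
  have s2 : gCoef γ (k - 1) = - gCoef γ k * ((γ / 2 + k) / (γ / 2 - k + 1)) := by
    have := gCoef_succ h1 h2 (-k)
    rw [gCoef_neg, show -k + 1 = -(k - 1) by ring, gCoef_neg] at this
    rw [this]; push_cast; ring
  have e1 : γ + 2 * k + 2 ≠ 0 := by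
    have := half_ne_int h1 h2 (-k - 1)
    push_cast at this
    intro h; apply this; linarith
  have e2 : γ - 2 * k + 2 ≠ 0 := by
    have := half_ne_int h1 h2 (k - 1)
    push_cast at this
    intro h; apply this; linarith
  have hs : sCoef γ k = gCoef γ k *
    (1 + γ * (γ + 1) * (γ + 2) / (6 * (γ - 2 * k + 2) * (γ + 2 * k + 2))) := rfl
  rw [hs, s1, s2]
  have b1 : γ / 2 + k + 1 = (γ + 2 * k + 2) / 2 := by ring
  have b2 : γ / 2 - k + 1 = (γ - 2 * k + 2) / 2 := by ring
  rw [b1, b2]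
  field_simp
  ring

lemma gCoef_zero_pos {γ : ℝ} (h1 : 1 < γ) : 0 < gCoef γ 0 := by
  unfold gCoef
  have := Real.Gamma_pos_of_pos (show 0 < γ + 1 by linarith)
  have := Real.Gamma_pos_of_pos (show 0 < γ / 2 + 1 by linarith)
  simp
  positivity

lemma gCoef_nat_neg {γ : ℝ} (h1 : 1 < γ) (h2 : γ < 2) (n : ℕ) :
    gCoef γ ((n : ℤ) + 1) < 0 := by
  induction n with
  | zero =>
    rw [gCoef_succ h1 h2]
    have := gCoef_zero_pos h1
    have h : 0 < (γ / 2 - ((0 : ℕ) : ℤ)) / (γ / 2 + ((0 : ℕ) : ℤ) + 1) := by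
      simp; positivity
    simp only [Nat.cast_zero] at *
    nlinarith
  | succ n ih =>
    rw [gCoef_succ h1 h2]
    push_cast at *
    have h : (γ / 2 - ((n : ℝ) + 1)) / (γ / 2 + ((n : ℝ) + 1) + 1) < 0 := by
      apply div_neg_of_neg_of_pos
      · have : (0 : ℝ) ≤ n := n.cast_nonneg
        linarith
      · positivity
    nlinarith

lemma gCoef_nonpos {γ : ℝ} (h1 : 1 < γ) (h2 : γ < 2) (k : ℤ) (hk : k ≠ 0) :
    gCoef γ k ≤ 0 := by
  obtain ⟨n, hn | hn⟩ := k.eq_nat_or_neg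
  · obtain ⟨m, rfl⟩ : ∃ m, n = m + 1 := ⟨n - 1, by omega⟩
    rw [hn]; exact_mod_cast (gCoef_nat_neg h1 h2 m).le
  · obtain ⟨m, rfl⟩ : ∃ m, n = m + 1 := ⟨n - 1, by omega⟩
    rw [hn, gCoef_neg]; exact_mod_cast (gCoef_nat_neg h1 h2 m).le

lemma partial_sum {γ : ℝ} (h1 : 1 < γ) (h2 : γ < 2) (m : ℕ) :
    gCoef γ 0 + 2 * ∑ k ∈ Finset.range m, gCoef γ ((k : ℤ) + 1)
      = gCoef γ m * ((γ / 2 - m) / (γ / 2)) := by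
  have hg : γ / 2 ≠ 0 := by linarith
  induction m with
  | zero => simp [div_self hg]
  | succ m ih =>
    rw [Finset.sum_range_succ, mul_add, ← add_assoc, ih]
    have : γ / 2 + m + 1 ≠ 0 := by positivity
    push_cast
    rw [gCoef_succ h1 h2]
    push_cast
    generalize γ / 2 = a at *
    field_simp
    ring

lemma partial_sum_pos {γ : ℝ} (h1 : 1 < γ) (h2 : γ < 2) (m : ℕ) :
    0 < gCoef γ 0 + 2 * ∑ k ∈ Finset.range m, gCoef γ ((k : ℤ) + 1) := by
  cases m with
  | zero => simpa using gCoef_zero_pos h1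
  | succ m =>
    rw [partial_sum h1 h2]
    have := gCoef_nat_neg h1 h2 m
    push_cast
    apply mul_pos_of_neg_of_neg this
    apply div_neg_of_neg_of_pos
    · have : (0 : ℝ) ≤ m := m.cast_nonneg
      linarith
    · linarith

lemma row_pos {γ : ℝ} (h1 : 1 < γ) (h2 : γ < 2) (N i : ℕ) (hi : i < N) :
    0 < ∑ j ∈ Finset.range N, gCoef γ ((i : ℤ) - j) := by
  obtain ⟨m, rfl⟩ : ∃ m, N = i + 1 + m := ⟨N - (i + 1), by omega⟩
  rw [Finset.sum_range_add, Finset.sum_range_succ]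
  have A : ∑ j ∈ Finset.range i, gCoef γ ((i : ℤ) - j)
      = ∑ k ∈ Finset.range i, gCoef γ ((k : ℤ) + 1) := by
    rw [← Finset.sum_range_reflect]
    apply Finset.sum_congr rfl
    intro j hj
    have := Finset.mem_range.1 hj
    congr 1
    omega
  have B : ∑ x ∈ Finset.range m, gCoef γ ((i : ℤ) - ((i + 1 + x : ℕ) : ℤ))
      = ∑ k ∈ Finset.range m, gCoef γ ((k : ℤ) + 1) := by
    apply Finset.sum_congr rfl
    intro j hj
    rw [← gCoef_neg]
    congr 1
    push_cast; ring
  rw [A, B, sub_self]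
  have := partial_sum_pos h1 h2 m
  have := partial_sum_pos h1 h2 i
  linarith

/-- The bilinear form of the Toeplitz matrix. -/
noncomputable def Bf (γ : ℝ) (N : ℕ) (u v : ℕ → ℝ) : ℝ :=
  ∑ i ∈ Finset.range N, ∑ j ∈ Finset.range N, gCoef γ ((i : ℤ) - j) * (u i * v j)

lemma Bf_pos {γ : ℝ} (h1 : 1 < γ) (h2 : γ < 2) (N : ℕ) (u : ℕ → ℝ)
    (hu : ∃ i < N, u i ≠ 0) : 0 < Bf γ N u u := by
  have key : Bf γ N u u = ∑ i ∈ Finset.range N, (∑ j ∈ Finset.range N, gCoef γ ((i : ℤ) - j)) * u i ^ 2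
      - 1 / 2 * ∑ i ∈ Finset.range N, ∑ j ∈ Finset.range N,
          gCoef γ ((i : ℤ) - j) * (u i - u j) ^ 2 := by
    have sw : ∑ i ∈ Finset.range N, ∑ j ∈ Finset.range N, gCoef γ ((i : ℤ) - j) * u j ^ 2
        = ∑ i ∈ Finset.range N, ∑ j ∈ Finset.range N, gCoef γ ((i : ℤ) - j) * u i ^ 2 := by
      rw [Finset.sum_comm]
      refine Finset.sum_congr rfl fun i _ => Finset.sum_congr rfl fun j _ => ?_
      rw [← gCoef_neg, neg_sub]
    have ex : ∑ i ∈ Finset.range N, ∑ j ∈ Finset.range N, gCoef γ ((i : ℤ) - j) * (u i - u j) ^ 2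
        = ∑ i ∈ Finset.range N, ∑ j ∈ Finset.range N, gCoef γ ((i : ℤ) - j) * u i ^ 2
        + ∑ i ∈ Finset.range N, ∑ j ∈ Finset.range N, gCoef γ ((i : ℤ) - j) * u j ^ 2
        - 2 * Bf γ N u u := by
      unfold Bf
      simp only [Finset.mul_sum, ← Finset.sum_add_distrib, ← Finset.sum_sub_distrib]
      refine Finset.sum_congr rfl fun i _ => Finset.sum_congr rfl fun j _ => ?_
      ring
    rw [ex, sw]
    simp only [Finset.sum_mul]
    ring
  have p1 : 0 < ∑ i ∈ Finset.range N, (∑ j ∈ Finset.range N, gCoef γ ((i : ℤ) - j)) * u i ^ 2 := by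
    obtain ⟨i, hi, hne⟩ := hu
    apply Finset.sum_pos'
    · intro j hj
      exact mul_nonneg (row_pos h1 h2 N j (Finset.mem_range.1 hj)).le (sq_nonneg _)
    · exact ⟨i, Finset.mem_range.2 hi, mul_pos (row_pos h1 h2 N i hi) (by positivity)⟩
  have p2 : ∑ i ∈ Finset.range N, ∑ j ∈ Finset.range N,
          gCoef γ ((i : ℤ) - j) * (u i - u j) ^ 2 ≤ 0 := by
    refine Finset.sum_nonpos fun i _ => Finset.sum_nonpos fun j _ => ?_
    by_cases hij : i = j
    · simp [hij]
    · exact mul_nonpos_of_nonpos_of_nonneg (gCoef_nonpos h1 h2 _ (by omega)) (sq_nonneg _)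
  rw [key]; linarith

/-- Shift of a sequence. -/
def shf (u : ℕ → ℝ) : ℕ → ℝ
  | 0 => 0
  | n + 1 => u n

lemma Bf_pm (γ : ℝ) (N : ℕ) (u v : ℕ → ℝ) (e : ℝ) :
    Bf γ N (fun i => u i + e * v i) (fun i => u i + e * v i)
      = Bf γ N u u + e * Bf γ N u v + e * Bf γ N v u + e ^ 2 * Bf γ N v v := by
  unfold Bf
  simp only [Finset.mul_sum, ← Finset.sum_add_distrib]
  refine Finset.sum_congr rfl fun i _ => Finset.sum_congr rfl fun j _ => ?_
  ring

lemma quad (γ : ℝ) (h1 : 1 < γ) (h2 : γ < 2) (N : ℕ) (u : ℕ → ℝ) (hN : u N = 0)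
    (hu : ∃ i < N, u i ≠ 0) :
    let P := ∑ i ∈ Finset.range N, ∑ j ∈ Finset.range N, sCoef γ ((i : ℤ) - j) * (u i * u j)
    Bf γ N u u < P ∧ P < 4 / 3 * Bf γ N u u := by
  intro P
  have c1 : Bf γ (N + 1) u u = Bf γ N u u := by
    unfold Bf
    simp [Finset.sum_range_succ, hN]
  have c2 : Bf γ (N + 1) (shf u) (shf u) = Bf γ N u u := by
    unfold Bf
    simp [Finset.sum_range_succ', shf]
  have c3 : Bf γ (N + 1) u (shf u) = ∑ i ∈ Finset.range N, ∑ j ∈ Finset.range N,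
      gCoef γ ((i : ℤ) - j - 1) * (u i * u j) := by
    unfold Bf
    rw [Finset.sum_range_succ]
    simp [Finset.sum_range_succ', shf, hN, sub_sub]
  have c4 : Bf γ (N + 1) (shf u) u = ∑ i ∈ Finset.range N, ∑ j ∈ Finset.range N,
      gCoef γ ((i : ℤ) - j + 1) * (u i * u j) := by
    unfold Bf
    rw [Finset.sum_range_succ']
    simp [Finset.sum_range_succ, shf, hN, sub_add_eq_add_sub]
  have hP : P = Bf γ N u u + γ / 24 * (2 * Bf γ N u u - Bf γ (N + 1) u (shf u)
      - Bf γ (N + 1) (shf u) u) := by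
    rw [c3, c4]
    unfold Bf
    simp only [P, Finset.mul_sum, ← Finset.sum_add_distrib, ← Finset.sum_sub_distrib]
    refine Finset.sum_congr rfl fun i _ => Finset.sum_congr rfl fun j _ => ?_
    rw [sCoef_eq h1 h2]
    ring
  have ne : ∀ e : ℝ, ∃ i < N + 1, u i + e * shf u i ≠ 0 := by
    intro e
    by_contra! h
    have all : ∀ i, i < N + 1 → u i = 0 := by
      intro i
      induction i with
      | zero => intro hi; simpa [shf] using h 0 hi
      | succ i ih =>
        intro hi
        have := h (i + 1) hi
        simpa [shf, ih (by omega)] using this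
    obtain ⟨i, hi, hne⟩ := hu
    exact hne (all i (by omega))
  have D := Bf_pos h1 h2 (N + 1) _ (ne (-1))
  have S := Bf_pos h1 h2 (N + 1) _ (ne 1)
  rw [Bf_pm, c1, c2] at D S
  rw [hP]
  generalize Bf γ N u u = q at *
  generalize Bf γ (N + 1) u (shf u) = a at *
  generalize Bf γ (N + 1) (shf u) u = b at *
  constructor
  · nlinarith
  · nlinarith

lemma form_eq (c : ℤ → ℝ) (N : ℕ) (y : Fin N → ℝ) (u : ℕ → ℝ) (hu : ∀ i : Fin N, y i = u i) :
    y ⬝ᵥ (fun i j => c ((i : ℤ) - (j : ℤ)) : Matrix (Fin N) (Fin N) ℝ) *ᵥ y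
      = ∑ i ∈ Finset.range N, ∑ j ∈ Finset.range N, c ((i : ℤ) - j) * (u i * u j) := by
  rw [← Fin.sum_univ_eq_sum_range (fun i => ∑ j ∈ Finset.range N, c ((i : ℤ) - j) * (u i * u j))]
  simp only [dotProduct, mulVec, Finset.mul_sum]
  refine Finset.sum_congr rfl fun i _ => ?_
  rw [← Fin.sum_univ_eq_sum_range (fun j => c ((i : ℤ) - j) * (u i * u j))]
  refine Finset.sum_congr rfl fun j _ => ?_
  rw [hu i, hu j]; ring

theorem stmt_15 (γ : ℝ) (hγ : γ ∈ Set.Ioo (1 : ℝ) 2) (N : ℕ) (hN : 1 ≤ N) :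
    (∀ y : Fin N → ℝ, y ≠ 0 →
      y ⬝ᵥ Ahat γ N *ᵥ y < y ⬝ᵥ Amat γ N *ᵥ y ∧
      y ⬝ᵥ Amat γ N *ᵥ y < (4 / 3) * (y ⬝ᵥ Ahat γ N *ᵥ y)) ∧
    (∀ (μ : ℝ) (v : Fin N → ℝ), v ≠ 0 →
      ((Ahat γ N)⁻¹ * Amat γ N) *ᵥ v = μ • v → 1 < μ ∧ μ < 4 / 3) := by
  obtain ⟨h1, h2⟩ := hγ
  have main : ∀ y : Fin N → ℝ, y ≠ 0 →
      y ⬝ᵥ Ahat γ N *ᵥ y < y ⬝ᵥ Amat γ N *ᵥ y ∧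
      y ⬝ᵥ Amat γ N *ᵥ y < (4 / 3) * (y ⬝ᵥ Ahat γ N *ᵥ y) := by
    intro y hy
    let u : ℕ → ℝ := fun n => if h : n < N then y ⟨n, h⟩ else 0
    have hu : ∀ i : Fin N, y i = u i := by intro i; simp [u]
    have e1 := form_eq (gCoef γ) N y u hu
    have e2 := form_eq (sCoef γ) N y u hu
    obtain ⟨i, hi⟩ := Function.ne_iff.1 hy
    have := quad γ h1 h2 N u (by simp [u]) ⟨i, i.2, by rw [← hu]; exact hi⟩
    simp only [Bf] at this
    rw [← e1, ← e2] at this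
    exact this
  refine ⟨main, ?_⟩
  intro μ v hv hμ
  have hdet : IsUnit (Ahat γ N).det := by
    rw [isUnit_iff_ne_zero]
    intro h0
    obtain ⟨w, hw, hw0⟩ := Matrix.exists_mulVec_eq_zero_iff.2 h0
    have := main w hw
    rw [hw0] at this
    simp only [dotProduct_zero, mul_zero] at this
    linarith [this.1, this.2]
  have hA : Amat γ N *ᵥ v = μ • (Ahat γ N *ᵥ v) := by
    rw [← Matrix.mulVec_smul, ← hμ, Matrix.mulVec_mulVec, ← Matrix.mul_assoc,
      Matrix.mul_nonsing_inv _ hdet, Matrix.one_mul]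
  obtain ⟨m1, m2⟩ := main v hv
  rw [hA, dotProduct_smul, smul_eq_mul] at m1 m2
  have hq : 0 < v ⬝ᵥ Ahat γ N *ᵥ v := by linarith
  constructor
  · by_contra! h; nlinarith
  · by_contra! h; nlinarith
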